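/- arXiv:math/0609757 — 5 statements merged into one kernel-verified Lean document; each statement's English description precedes it below -/
import Mathlib

section
/- Let G be a finite simple graph, let u and v be adjacent vertices of G each of degree at most 3, and let L be a list assignment with |L(w)| ≥ 3 for every vertex w. If the graph G − {u, v} (the subgraph induced on V(G) \ {u, v}) admits an (L,1)*-coloring, then G admits an (L,1)*-coloring. -/
/-!
Besides each other, `u` and `v` have at most two neighbors each, so a list of size three always
contains a color used by none of these (`exists_free_color`). Giving `u` and `v` such colors
creates no new monochromatic edge except possibly `uv` itself. Hence the vertices outside `{u, v}`
keep their old same-colored neighbors, and each of `u`, `v` has at most one, namely the other.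
-/

/-- An `(L,1)*`-coloring of `G`: every vertex gets a color from its list, and
each vertex has at most one neighbor receiving its own color. -/
def IsL1StarColoring {V α : Type*} (G : SimpleGraph V) (L : V → Finset α)
    (φ : V → α) : Prop :=
  (∀ v, φ v ∈ L v) ∧
    ∀ v u w, G.Adj v u → G.Adj v w → φ u = φ v → φ w = φ v → u = w

/-- If `b` is one of the at most three neighbors of `a`, any set `S` of at least three colors contains one
not used on any other neighbor. -/
lemma exists_free_color {V α : Type*} [Fintype V] [DecidableEq V]
    (G : SimpleGraph V) [DecidableRel G.Adj] {a b : V} (hab : G.Adj a b)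
    (ha : G.degree a ≤ 3) (S : Finset α) (hS : 3 ≤ S.card) (ψ : V → α) :
    ∃ c ∈ S, ∀ x, G.Adj a x → x ≠ b → ψ x ≠ c := by
  classical
  have hcard : (((G.neighborFinset a).erase b).image ψ).card < S.card := by
    have h1 := Finset.card_image_le (s := (G.neighborFinset a).erase b) (f := ψ)
    have h2 := Finset.card_erase_lt_of_mem ((G.mem_neighborFinset a b).2 hab)
    rw [G.card_neighborFinset_eq_degree] at h2
    omega
  obtain ⟨c, hc, hc'⟩ := Finset.exists_mem_notMem_of_card_lt_card hcard
  refine ⟨c, hc, fun x hx hxb hxc => hc' ?_⟩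
  exact Finset.mem_image.2 ⟨x, Finset.mem_erase.2 ⟨hxb, (G.mem_neighborFinset a x).2 hx⟩, hxc⟩

/-- If `u` and `v` are adjacent vertices each of degree at most 3, all lists
have size at least 3, and `G - {u, v}` admits an `(L,1)*`-coloring, then so
does `G`. -/
theorem stmt_1 {V α : Type*} [Fintype V] [DecidableEq V]
    (G : SimpleGraph V) [DecidableRel G.Adj] (u v : V) (huv : G.Adj u v)
    (hu : G.degree u ≤ 3) (hv : G.degree v ≤ 3)
    (L : V → Finset α) (hL : ∀ w, 3 ≤ (L w).card)
    (h : ∃ φ : {w : V | w ≠ u ∧ w ≠ v} → α,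
      IsL1StarColoring (G.induce {w : V | w ≠ u ∧ w ≠ v}) (fun w => L w.1) φ) :
    ∃ φ : V → α, IsL1StarColoring G L φ := by
  classical
  obtain ⟨φ, hφL, hφ⟩ := h
  have hne : ∀ w, ∃ c, c ∈ L w := fun w =>
    Finset.card_pos.1 (lt_of_lt_of_le (by norm_num) (hL w))
  choose d hd using hne
  -- The values of `ψ` at `u` and `v` are irrelevant.
  let ψ : V → α := fun w => if hw : w ≠ u ∧ w ≠ v then φ ⟨w, hw⟩ else d w
  have hψL : ∀ w, w ≠ u → w ≠ v → ψ w ∈ L w := by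
    intro w h1 h2
    have : ψ w = φ ⟨w, h1, h2⟩ := dif_pos ⟨h1, h2⟩
    rw [this]
    exact hφL ⟨w, h1, h2⟩
  have hψ : ∀ x y z, x ≠ u → x ≠ v → y ≠ u → y ≠ v → z ≠ u → z ≠ v →
      G.Adj x y → G.Adj x z → ψ y = ψ x → ψ z = ψ x → y = z := by
    intro x y z x1 x2 y1 y2 z1 z2 hxy hxz e1 e2
    have ex : ψ x = φ ⟨x, x1, x2⟩ := dif_pos ⟨x1, x2⟩
    have ey : ψ y = φ ⟨y, y1, y2⟩ := dif_pos ⟨y1, y2⟩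
    have ez : ψ z = φ ⟨z, z1, z2⟩ := dif_pos ⟨z1, z2⟩
    rw [ex, ey] at e1
    rw [ex, ez] at e2
    exact congrArg Subtype.val (hφ ⟨x, x1, x2⟩ ⟨y, y1, y2⟩ ⟨z, z1, z2⟩ hxy hxz e1 e2)
  obtain ⟨a, haL, ha⟩ := exists_free_color G huv hu (L u) (hL u) ψ
  obtain ⟨b, hbL, hb⟩ := exists_free_color G huv.symm hv (L v) (hL v) ψ
  clear_value ψ
  have huv' : u ≠ v := huv.ne
  let χ : V → α := fun w => if w = u then a else if w = v then b else ψ w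
  have χu : χ u = a := if_pos rfl
  have χv : χ v = b := by simp [χ, huv'.symm]
  have χo : ∀ w, w ≠ u → w ≠ v → χ w = ψ w := fun w h1 h2 => by simp [χ, h1, h2]
  clear_value χ
  have key_u : ∀ y, G.Adj u y → χ y = χ u → y = v := by
    intro y hy e
    by_contra hyv
    rw [χo y hy.ne' hyv, χu] at e
    exact ha y hy hyv e
  have key_v : ∀ y, G.Adj v y → χ y = χ v → y = u := by
    intro y hy e
    by_contra hyu
    rw [χo y hyu hy.ne', χv] at e
    exact hb y hy hyu e
  -- A same-colored neighbor of a vertex outside `{u, v}` lies outside `{u, v}`.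
  have key_o : ∀ x y, x ≠ u → x ≠ v → G.Adj x y → χ y = χ x → y ≠ u ∧ y ≠ v := by
    intro x y x1 x2 hxy e
    constructor
    · rintro rfl
      exact x2 (key_u x hxy.symm e.symm)
    · rintro rfl
      exact x1 (key_v x hxy.symm e.symm)
  refine ⟨χ, fun w => ?_, fun x y z hxy hxz e1 e2 => ?_⟩
  · by_cases h1 : w = u
    · rw [h1, χu]
      exact haL
    by_cases h2 : w = v
    · rw [h2, χv]
      exact hbL
    rw [χo w h1 h2]
    exact hψL w h1 h2
  · by_cases h1 : x = u
    · subst h1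
      rw [key_u y hxy e1, key_u z hxz e2]
    by_cases h2 : x = v
    · subst h2
      rw [key_v y hxy e1, key_v z hxz e2]
    obtain ⟨y1, y2⟩ := key_o x y h1 h2 hxy e1
    obtain ⟨z1, z2⟩ := key_o x z h1 h2 hxz e2
    rw [χo x h1 h2, χo y y1 y2] at e1
    rw [χo x h1 h2, χo z z1 z2] at e2
    exact hψ x y z h1 h2 y1 y2 z1 z2 hxy hxz e1 e2
end

section
/- Let G be a finite simple graph containing a triangle on vertices x, y, z such that x has degree 3 and y and z each have degree 4 in G, and let L be a list assignment with |L(w)| ≥ 3 for every vertex w. If the graph G − {x, y, z} (the subgraph induced on V(G) \ {x, y, z}) admits an (L,1)*-coloring, then G admits an (L,1)*-coloring. -/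
/-- The greedy step: a list of size at least 3 contains a color avoiding those of any set of at
most two vertices. -/
lemma exists_color_avoiding {V α : Type*} (S : Finset α) (hS : 3 ≤ S.card) (f : V → α)
    (N : Finset V) (hN : N.card ≤ 2) : ∃ c ∈ S, ∀ u ∈ N, f u ≠ c := by
  classical
  have hlt : (N.image f).card < S.card := by
    have := Finset.card_image_le (s := N) (f := f)
    omega
  obtain ⟨c, hc, hcN⟩ := Finset.exists_mem_notMem_of_card_lt_card hlt
  exact ⟨c, hc, fun u hu h => hcN (Finset.mem_image.2 ⟨u, hu, h⟩)⟩

/-- If `G` contains a triangle `x y z` with `deg x = 3`, `deg y = deg z = 4`,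
all lists have size at least 3, and `G - {x, y, z}` admits an
`(L,1)*`-coloring, then so does `G`. -/
theorem stmt_2 {V α : Type*} [Fintype V] [DecidableEq V]
    (G : SimpleGraph V) [DecidableRel G.Adj] (x y z : V)
    (hxy : G.Adj x y) (hyz : G.Adj y z) (hxz : G.Adj x z)
    (hdx : G.degree x = 3) (hdy : G.degree y = 4) (hdz : G.degree z = 4)
    (L : V → Finset α) (hL : ∀ w, 3 ≤ (L w).card)
    (h : ∃ φ : {w : V | w ∉ ({x, y, z} : Set V)} → α,
      IsL1StarColoring (G.induce {w : V | w ∉ ({x, y, z} : Set V)})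
        (fun w => L w.1) φ) :
    ∃ φ : V → α, IsL1StarColoring G L φ := by
  classical
  obtain ⟨φ, hφL, hφ⟩ := h
  have nxy := hxy.ne
  have nyz := hyz.ne
  have nxz := hxz.ne
  have hne : ∀ w, (L w).Nonempty := fun w => Finset.card_pos.1 (by have := hL w; omega)
  -- Extend `φ` to all of `V`; its values on the triangle are overwritten below.
  obtain ⟨ψ, hψL, hψ⟩ : ∃ ψ : V → α, (∀ v, ψ v ∈ L v) ∧
      ∀ v u w, v ∉ ({x, y, z} : Set V) → u ∉ ({x, y, z} : Set V) → w ∉ ({x, y, z} : Set V) →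
        G.Adj v u → G.Adj v w → ψ u = ψ v → ψ w = ψ v → u = w := by
    refine ⟨fun v => if hv : v ∉ ({x, y, z} : Set V) then φ ⟨v, hv⟩ else (hne v).choose, ?_, ?_⟩
    · intro v
      by_cases hv : v ∉ ({x, y, z} : Set V)
      · simp only [dif_pos hv]
        exact hφL ⟨v, hv⟩
      · simp only [dif_neg hv]
        exact (hne v).choose_spec
    · intro v u w hv hu hw hvu hvw e₁ e₂
      simp only [dif_pos hv, dif_pos hu, dif_pos hw] at e₁ e₂
      exact congrArg Subtype.val (hφ ⟨v, hv⟩ ⟨u, hu⟩ ⟨w, hw⟩ hvu hvw e₁ e₂)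
  have outer : ∀ p q r, G.Adj p q → G.Adj p r → q ≠ r →
      (((G.neighborFinset p).erase q).erase r).card = G.degree p - 2 := by
    intro p q r hq hr hqr
    rw [Finset.card_erase_of_mem, Finset.card_erase_of_mem, G.card_neighborFinset_eq_degree]
    · omega
    · simpa using hq
    · simpa using ⟨hqr.symm, hr⟩
  obtain ⟨b, hbL, hb⟩ := exists_color_avoiding (L y) (hL y) ψ _
    (by rw [outer y x z hxy.symm hyz nxz, hdy])
  obtain ⟨c, hcL, hc⟩ := exists_color_avoiding (L z) (hL z) ψ _
    (by rw [outer z x y hxz.symm hyz.symm nxy, hdz])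
  -- With `y` recolored by `b`, avoiding the colors on all neighbors of `x` except `z` rules out `b`.
  obtain ⟨a, haL, ha⟩ := exists_color_avoiding (L x) (hL x) (Function.update ψ y b)
    ((G.neighborFinset x).erase z) (by
      rw [Finset.card_erase_of_mem (by simpa using hxz), G.card_neighborFinset_eq_degree, hdx])
  have hab : b ≠ a := by simpa using ha y (by simp [nyz, hxy])
  have ha' : ∀ u, G.Adj x u → u ≠ y → u ≠ z → ψ u ≠ a := fun u hu h1 h2 => by
    simpa [h1] using ha u (by simp [h2, hu])
  have hb' : ∀ u, G.Adj y u → u ≠ x → u ≠ z → ψ u ≠ b := fun u hu h1 h2 =>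
    hb u (by simp [h1, h2, hu])
  have hc' : ∀ u, G.Adj z u → u ≠ x → u ≠ y → ψ u ≠ c := fun u hu h1 h2 =>
    hc u (by simp [h1, h2, hu])
  simp only [Set.mem_insert_iff, Set.mem_singleton_iff, not_or] at hψ
  refine ⟨fun v => if v = x then a else if v = y then b else if v = z then c else ψ v, ?_, ?_⟩
  · intro v
    dsimp only
    split_ifs with h1 h2 h3
    · exact h1 ▸ haL
    · exact h2 ▸ hbL
    · exact h3 ▸ hcL
    · exact hψL v
  · intro v u w hvu hvw e₁ e₂
    dsimp only at e₁ e₂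
    have hvu' := hvu.symm
    have hvw' := hvw.symm
    have nvu := hvu.ne
    have nvw := hvw.ne
    clear hφL hφ hne outer hb hc ha hL hψL hdx hdy hdz
    grind
end

section
/- Let G be a finite simple graph containing a 4-cycle on vertices x, y, z, u (with edges xy, yz, zu, ux) such that x and z each have degree 3 and y and u each have degree 4 in G, and let L be a list assignment with |L(w)| ≥ 3 for every vertex w. If the graph G − {x, y, z, u} (the subgraph induced on V(G) \ {x, y, z, u}) admits an (L,1)*-coloring, then G admits an (L,1)*-coloring. -/
/-- The colors of `l` that `ψ` does not use on the neighbors of `v` outside `S`. -/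
noncomputable def avail {V α : Type*} [Fintype V] [DecidableEq V] [DecidableEq α]
    (G : SimpleGraph V) [DecidableRel G.Adj] (S : Finset V) (l : Finset α) (ψ : V → α) (v : V) :
    Finset α :=
  l \ (G.neighborFinset v \ S).image ψ

/-- Each neighbor of `v` lying in `S` is one that forbids no color. -/
lemma card_avail {V α : Type*} [Fintype V] [DecidableEq V] [DecidableEq α]
    (G : SimpleGraph V) [DecidableRel G.Adj] (S : Finset V) (l : Finset α) (ψ : V → α) (v : V)
    (T : Finset V) (hT : ∀ t ∈ T, G.Adj v t ∧ t ∈ S) :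
    l.card + T.card ≤ (avail G S l ψ v).card + G.degree v := by
  have h1 := Finset.le_card_sdiff ((G.neighborFinset v \ S).image ψ) l
  have h2 : ((G.neighborFinset v \ S).image ψ).card ≤ (G.neighborFinset v \ S).card :=
    Finset.card_image_le
  have h3 : (G.neighborFinset v \ S).card + T.card ≤ G.degree v := by
    rw [← G.card_neighborFinset_eq_degree, ← Finset.card_union_of_disjoint]
    · apply Finset.card_le_card
      intro w hw
      rcases Finset.mem_union.1 hw with hw | hw
      · exact (Finset.mem_sdiff.1 hw).1
      · exact (G.mem_neighborFinset v w).2 (hT w hw).1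
    · rw [Finset.disjoint_left]
      intro w hw hw'
      exact (Finset.mem_sdiff.1 hw).2 (hT w hw').2
  unfold avail
  omega

lemma exists_ne_of_two_le {α : Type*} (A : Finset α) (hA : 2 ≤ A.card) (a : α) :
    ∃ c ∈ A, c ≠ a :=
  Finset.exists_mem_ne (by omega) a

lemma exists_ne_ne_of_three_le {α : Type*} [DecidableEq α] (A : Finset α) (hA : 3 ≤ A.card)
    (a b : α) : ∃ c ∈ A, c ≠ a ∧ c ≠ b := by
  have h : 2 ≤ (A.erase a).card := by
    have := Finset.pred_card_le_card_erase (s := A) (a := a)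
    omega
  obtain ⟨c, hc, hcb⟩ := exists_ne_of_two_le _ h b
  exact ⟨c, Finset.mem_of_mem_erase hc, Finset.ne_of_mem_erase hc, hcb⟩

/-- Colors for the two opposite vertices `x`, `z` of the cycle, given the colors `a`, `b` of the
other two. The proposition `p` stands for the presence of the chord `xz`. -/
lemma exists_pair {α : Type*} [DecidableEq α] (p : Prop) (A B : Finset α) (a b : α)
    (hA : 2 ≤ A.card) (hB : 2 ≤ B.card) (hA' : p → 3 ≤ A.card) (hB' : p → 3 ≤ B.card) :
    ∃ c ∈ A, ∃ d ∈ B, ((c ≠ a ∧ c ≠ b) ∧ (d ≠ a ∧ d ≠ b)) ∨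
      (¬ p ∧ a ≠ b ∧ ¬ (c = a ∧ d = a) ∧ ¬ (c = b ∧ d = b)) := by
  by_cases hp : p
  · obtain ⟨c, hc, h⟩ := exists_ne_ne_of_three_le A (hA' hp) a b
    obtain ⟨d, hd, hdn⟩ := exists_ne_ne_of_three_le B (hB' hp) a b
    exact ⟨c, hc, d, hd, Or.inl ⟨h, hdn⟩⟩
  · -- Since `c ≠ a`, only `c = d = b` could go wrong, and `d` avoids `b`.
    obtain ⟨c, hc, h⟩ := exists_ne_of_two_le A hA a
    obtain ⟨d, hd, hdn⟩ := exists_ne_of_two_le B hB b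
    refine ⟨c, hc, d, hd, ?_⟩
    by_cases hab : a = b
    · subst hab
      exact Or.inl ⟨⟨h, h⟩, ⟨hdn, hdn⟩⟩
    · exact Or.inr ⟨hp, hab, fun e => h e.1, fun e => hdn e.2⟩

/-- If `G` contains a 4-cycle `x y z u` (edges `xy`, `yz`, `zu`, `ux`) with
`deg x = deg z = 3`, `deg y = deg u = 4`, all lists have size at least 3, and
`G - {x, y, z, u}` admits an `(L,1)*`-coloring, then so does `G`. -/
theorem stmt_3 {V α : Type*} [Fintype V] [DecidableEq V]
    (G : SimpleGraph V) [DecidableRel G.Adj] (x y z u : V)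
    (hxy : G.Adj x y) (hyz : G.Adj y z) (hzu : G.Adj z u) (hux : G.Adj u x)
    (hxz : x ≠ z) (hyu : y ≠ u)
    (hdx : G.degree x = 3) (hdz : G.degree z = 3)
    (hdy : G.degree y = 4) (hdu : G.degree u = 4)
    (L : V → Finset α) (hL : ∀ w, 3 ≤ (L w).card)
    (h : ∃ φ : {w : V | w ∉ ({x, y, z, u} : Set V)} → α,
      IsL1StarColoring (G.induce {w : V | w ∉ ({x, y, z, u} : Set V)})
        (fun w => L w.1) φ) :
    ∃ φ : V → α, IsL1StarColoring G L φ := by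
  classical
  obtain ⟨φ, hφL, hφ⟩ := h
  have hne : ∀ w, ∃ e, e ∈ L w := fun w => Finset.card_pos.1 (by have := hL w; omega)
  choose g hg using hne
  -- The values of `g` are placeholders: `ψ` only matters outside the cycle.
  obtain ⟨ψ, hψ⟩ : ∃ ψ : V → α, ∀ w, (hw : w ∉ ({x, y, z, u} : Set V)) → ψ w = φ ⟨w, hw⟩ :=
    ⟨fun w => if hw : w ∉ ({x, y, z, u} : Set V) then φ ⟨w, hw⟩ else g w,
      fun w hw => dif_pos hw⟩
  set S : Finset V := {x, y, z, u} with hS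
  have hSmem : ∀ w, w ∉ S → w ∉ ({x, y, z, u} : Set V) := by
    intro w hw; simpa [hS] using hw
  have hψL : ∀ w, w ∉ S → ψ w ∈ L w := by
    intro w hw; rw [hψ w (hSmem w hw)]; exact hφL ⟨w, hSmem w hw⟩
  have hψc : ∀ v p q, v ∉ S → p ∉ S → q ∉ S → G.Adj v p → G.Adj v q → ψ p = ψ v →
      ψ q = ψ v → p = q := by
    intro v p q hv hp hq h1 h2 h3 h4
    rw [hψ _ (hSmem _ hv), hψ _ (hSmem _ hp)] at h3
    rw [hψ _ (hSmem _ hv), hψ _ (hSmem _ hq)] at h4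
    exact congrArg Subtype.val
      (hφ ⟨v, hSmem _ hv⟩ ⟨p, hSmem _ hp⟩ ⟨q, hSmem _ hq⟩ h1 h2 h3 h4)
  have nxy := hxy.ne
  have nyz := hyz.ne
  have nzu := hzu.ne
  have nux := hux.ne
  -- `two` counts the cycle edges at `v`; `three` counts a chord at `v` as well.
  have two : ∀ v s t, s ≠ t → G.Adj v s → G.Adj v t → s ∈ S → t ∈ S →
      5 ≤ (avail G S (L v) ψ v).card + G.degree v := by
    intro v s t hst hs ht hs' ht'
    have := card_avail G S (L v) ψ v {s, t} (by simp [hs, ht, hs', ht'])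
    rw [Finset.card_pair hst] at this
    have := hL v
    omega
  have three : ∀ v s t r, s ≠ t → s ≠ r → t ≠ r → G.Adj v s → G.Adj v t → G.Adj v r →
      s ∈ S → t ∈ S → r ∈ S → 6 ≤ (avail G S (L v) ψ v).card + G.degree v := by
    intro v s t r hst hsr htr hs ht hr hs' ht' hr'
    have := card_avail G S (L v) ψ v {s, t, r} (by simp [hs, ht, hr, hs', ht', hr'])
    rw [Finset.card_eq_three.2 ⟨s, t, r, hst, hsr, htr, rfl⟩] at this
    have := hL v
    omega
  have mx : x ∈ S := by simp [hS]
  have my : y ∈ S := by simp [hS]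
  have mz : z ∈ S := by simp [hS]
  have mu : u ∈ S := by simp [hS]
  have cx := two x y u hyu hxy hux.symm my mu
  have cz := two z y u hyu hyz.symm hzu my mu
  have cy := two y x z hxz hxy.symm hyz mx mz
  have cu := two u x z hxz hux hzu.symm mx mz
  have cx' : G.Adj x z → _ := fun e => three x y u z hyu nyz nzu.symm hxy hux.symm e my mu mz
  have cz' : G.Adj x z → _ := fun e =>
    three z y u x hyu nxy.symm nux hyz.symm hzu e.symm my mu mx
  have cu' : G.Adj y u → _ := fun e =>
    three u x z y hxz nxy nyz.symm hux hzu.symm e.symm mx mz my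
  obtain ⟨a, ha⟩ : (avail G S (L y) ψ y).Nonempty := Finset.card_pos.1 (by omega)
  obtain ⟨b, hb, hab⟩ : ∃ b ∈ avail G S (L u) ψ u, G.Adj y u → b ≠ a := by
    by_cases e : G.Adj y u
    · obtain ⟨b, hb, h⟩ := exists_ne_of_two_le (avail G S (L u) ψ u)
        (by have := cu' e; omega) a
      exact ⟨b, hb, fun _ => h⟩
    · obtain ⟨b, hb⟩ : (avail G S (L u) ψ u).Nonempty := Finset.card_pos.1 (by omega)
      exact ⟨b, hb, fun h => absurd h e⟩
  obtain ⟨c, hc, d, hd, hcd⟩ := exists_pair (G.Adj x z) (avail G S (L x) ψ x)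
    (avail G S (L z) ψ z) a b (by omega) (by omega)
    (fun e => by have := cx' e; omega) (fun e => by have := cz' e; omega)
  obtain ⟨χ, χx, χy, χz, χu, χo⟩ : ∃ χ : V → α, χ x = c ∧ χ y = a ∧ χ z = d ∧ χ u = b ∧
      ∀ w, w ∉ S → χ w = ψ w := by
    refine ⟨fun w => if w = x then c else if w = y then a else if w = z then d else
      if w = u then b else ψ w, ?_, ?_, ?_, ?_, ?_⟩
    · simp
    · simp [nxy.symm]
    · simp [hxz.symm, nyz.symm]
    · simp [nux, hyu.symm, nzu.symm]
    · intro w hw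
      simp only [hS, Finset.mem_insert, Finset.mem_singleton, not_or] at hw
      simp [hw]
  have hSc : ∀ w, w ∈ S → w = x ∨ w = y ∨ w = z ∨ w = u := by
    intro w hw; simpa [hS] using hw
  have hχA : ∀ w, w ∈ S → χ w ∈ avail G S (L w) ψ w := by
    intro w hw
    rcases hSc w hw with rfl | rfl | rfl | rfl
    · rwa [χx]
    · rwa [χy]
    · rwa [χz]
    · rwa [χu]
  have key : ∀ v w, v ∈ S → w ∉ S → G.Adj v w → χ v ≠ χ w := by
    intro v w hv hw hvw e
    apply (Finset.mem_sdiff.1 (hχA v hv)).2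
    rw [e, χo w hw]
    exact Finset.mem_image_of_mem _
      (Finset.mem_sdiff.2 ⟨(G.mem_neighborFinset v w).2 hvw, hw⟩)
  refine ⟨χ, fun v => ?_, ?_⟩
  · by_cases hv : v ∈ S
    · exact (Finset.mem_sdiff.1 (hχA v hv)).1
    · rw [χo v hv]; exact hψL v hv
  · intro v p q hp hq ep eq
    by_cases hv : v ∈ S
    · have hpS : p ∈ S := by
        by_contra h; exact key v p hv h hp ep.symm
      have hqS : q ∈ S := by
        by_contra h; exact key v q hv h hq eq.symm
      by_contra hpq
      have hvp := hp.ne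
      have hvq := hq.ne
      have sxz := G.adj_comm x z
      have syu := G.adj_comm y u
      clear two three cx cz cy cu cx' cz' cu' key hχA χo hψ hψL hψc hSmem hφ hφL
      rcases hSc v hv with rfl | rfl | rfl | rfl <;>
      rcases hSc p hpS with rfl | rfl | rfl | rfl <;>
      first
      | exact absurd rfl hvp
      | (rcases hSc q hqS with rfl | rfl | rfl | rfl <;>
        first
        | exact absurd rfl hvq
        | exact absurd rfl hpq
        | (simp only [χx, χy, χz, χu] at ep eq
           clear hSc hS mx my mz mu hg hL
           grind))
    · have hpS : p ∉ S := fun h => key p v h hv hp.symm ep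
      have hqS : q ∉ S := fun h => key q v h hv hq.symm eq
      rw [χo _ hpS, χo _ hv] at ep
      rw [χo _ hqS, χo _ hv] at eq
      exact hψc v p q hv hpS hqS hp hq ep eq
end

section
/- Let G be a finite simple graph and L a list assignment with |L(v)| ≥ 3 for every vertex v. Suppose G is not (L,1)*-colorable, but for every nonempty set S of vertices the induced subgraph G − S admits the restriction of L as an (L,1)*-coloring (i.e., every proper induced subgraph of G is (L,1)*-colorable). Then every vertex of G has degree at least 3 and no two vertices of degree 3 in G are adjacent. -/
theorem not_reducible {V α : Type*} [Fintype V] [DecidableEq V]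
    (G : SimpleGraph V) [DecidableRel G.Adj]
    (L : V → Finset α) (hL : ∀ v, 3 ≤ (L v).card)
    (hG : ¬ ∃ φ : V → α, IsL1StarColoring G L φ)
    (hmin : ∀ S : Set V, S.Nonempty →
      ∃ φ : ↥Sᶜ → α, IsL1StarColoring (G.induce Sᶜ) (fun w => L w.1) φ)
    (S : Finset V) (hS : S.Nonempty)
    (hout : ∀ v ∈ S, (G.neighborFinset v \ S).card ≤ 2)
    (hin : ∀ v ∈ S, ∀ u ∈ S, ∀ w ∈ S, G.Adj v u → G.Adj v w → u = w) : False := by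
  classical
  obtain ⟨φ, hφL, hφ⟩ := hmin (S : Set V) (by simpa using hS)
  have hne : ∀ v, (L v).Nonempty := fun v => Finset.card_pos.mp (by have := hL v; omega)
  -- The values of `f` on `S` are arbitrary and never used.
  let f : V → α := fun v => if h : v ∈ (S : Set V)ᶜ then φ ⟨v, h⟩ else (hne v).choose
  have hf : ∀ v (h : v ∈ (S : Set V)ᶜ), f v = φ ⟨v, h⟩ := fun v h => dif_pos h
  have hc : ∀ v, ∃ c ∈ L v, v ∈ S → ∀ w, w ∉ S → G.Adj v w → f w ≠ c := by
    intro v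
    by_cases hv : v ∈ S
    · have hlt : ((G.neighborFinset v \ S).image f).card < (L v).card :=
        (Finset.card_image_le.trans (hout v hv)).trans_lt (hL v)
      obtain ⟨c, hcL, hc⟩ := Finset.exists_mem_notMem_of_card_lt_card hlt
      refine ⟨c, hcL, fun _ w hw hvw hwc => hc ?_⟩
      exact Finset.mem_image.mpr ⟨w, by simp [hw, hvw], hwc⟩
    · obtain ⟨c, hcL⟩ := hne v
      exact ⟨c, hcL, fun h => absurd h hv⟩
  choose c hcL hc using hc
  let ψ : V → α := fun v => if v ∈ S then c v else f v
  have hψS : ∀ v ∈ S, ψ v = c v := fun v h => if_pos h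
  have hψf : ∀ v, v ∉ S → ψ v = f v := fun v h => if_neg h
  -- A monochromatic edge does not cross the boundary of `S`.
  have hcross : ∀ v u, G.Adj v u → ψ u = ψ v → (u ∈ S ↔ v ∈ S) := by
    intro v u hvu he
    by_cases hv : v ∈ S <;> by_cases hu : u ∈ S
    · simp [hu, hv]
    · rw [hψS v hv, hψf u hu] at he
      exact absurd he (hc v hv u hu hvu)
    · rw [hψS u hu, hψf v hv] at he
      exact absurd he.symm (hc u hu v hv hvu.symm)
    · simp [hu, hv]
  refine hG ⟨ψ, fun v => ?_, fun v u w hvu hvw heu hew => ?_⟩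
  · by_cases hv : v ∈ S
    · rw [hψS v hv]; exact hcL v
    · rw [hψf v hv, hf v (by simpa using hv)]; exact hφL ⟨v, _⟩
  · have hu := hcross v u hvu heu
    have hw := hcross v w hvw hew
    by_cases hv : v ∈ S
    · exact hin v hv u (hu.mpr hv) w (hw.mpr hv) hvu hvw
    · have hu' : u ∉ S := fun h => hv (hu.mp h)
      have hw' : w ∉ S := fun h => hv (hw.mp h)
      rw [hψf _ hv, hψf _ hu', hf v (by simpa using hv), hf u (by simpa using hu')] at heu
      rw [hψf _ hv, hψf _ hw', hf v (by simpa using hv), hf w (by simpa using hw')] at hew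
      exact congrArg Subtype.val
        (hφ ⟨v, by simpa using hv⟩ ⟨u, by simpa using hu'⟩ ⟨w, by simpa using hw'⟩
          hvu hvw heu hew)

/-- If all lists have size at least 3, `G` is not `(L,1)*`-colorable, but every
proper induced subgraph of `G` is (with the restricted lists), then every
vertex has degree at least 3 and no two vertices of degree 3 are adjacent. -/
theorem stmt_6 {V α : Type*} [Fintype V] [DecidableEq V]
    (G : SimpleGraph V) [DecidableRel G.Adj]
    (L : V → Finset α) (hL : ∀ v, 3 ≤ (L v).card)
    (hG : ¬ ∃ φ : V → α, IsL1StarColoring G L φ)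
    (hmin : ∀ S : Set V, S.Nonempty →
      ∃ φ : ↥Sᶜ → α, IsL1StarColoring (G.induce Sᶜ) (fun w => L w.1) φ) :
    (∀ v : V, 3 ≤ G.degree v) ∧
      ∀ u v : V, G.degree u = 3 → G.degree v = 3 → ¬ G.Adj u v := by
  constructor
  · intro v
    by_contra hlt
    refine not_reducible G L hL hG hmin {v} (by simp) ?_ ?_
    · intro x hx
      obtain rfl := Finset.mem_singleton.mp hx
      have := Finset.card_le_card (Finset.sdiff_subset (s := G.neighborFinset x) (t := {x}))
      rw [G.card_neighborFinset_eq_degree] at this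
      omega
    · intro x _ a ha b hb _ _
      rw [Finset.mem_singleton.mp ha, Finset.mem_singleton.mp hb]
  · intro u v hu hv huv
    -- An endpoint `x` of the edge loses its other endpoint `y` from its three neighbors.
    have key : ∀ x y, G.degree x = 3 → G.Adj x y → y ∈ ({u, v} : Finset V) →
        (G.neighborFinset x \ {u, v}).card ≤ 2 := by
      intro x y hx hxy hy
      have hlt : (G.neighborFinset x \ {u, v}).card < (G.neighborFinset x).card := by
        refine Finset.card_lt_card ((Finset.ssubset_iff_of_subset Finset.sdiff_subset).mpr ?_)
        exact ⟨y, by simpa using hxy, fun h => (Finset.mem_sdiff.mp h).2 hy⟩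
      rw [G.card_neighborFinset_eq_degree] at hlt
      omega
    refine not_reducible G L hL hG hmin {u, v} (by simp) ?_ ?_
    · intro x hx
      rcases Finset.mem_insert.mp hx with rfl | hx
      · exact key x v hu huv (by simp)
      · obtain rfl := Finset.mem_singleton.mp hx
        exact key x u hv huv.symm (by simp)
    · intro x hx a ha b hb hxa hxb
      have h1 := hxa.ne
      have h2 := hxb.ne
      simp only [Finset.mem_insert, Finset.mem_singleton] at hx ha hb
      grind
end

section
/- Let G be a finite simple graph and L a list assignment with |L(v)| ≥ 3 for every vertex v. Suppose G is not (L,1)*-colorable, but for every nonempty set S of vertices the induced subgraph G − S admits the restriction of L as an (L,1)*-coloring (i.e., every proper induced subgraph of G is (L,1)*-colorable). Then G contains no triangle whose vertices have degrees 3, 4, 4 in G, and G contains no 4-cycle whose vertices in cyclic order have degrees 3, 4, 3, 4 in G. -/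
/-- Contrapositive form of the extension argument: `A v` is the set of colors of `L v` not used on
the neighbors of `v` outside `S` in a fixed coloring of `G - S`. Any set `T` of neighbors of `v`
inside `S` bounds the size of `A v` from below, and no choice of colors from `A` is an
`(L,1)*`-coloring inside `S`. -/
lemma exists_available_lists {V α : Type*} [Fintype V] [DecidableEq V]
    (G : SimpleGraph V) [DecidableRel G.Adj]
    (L : V → Finset α) (hL : ∀ v, 3 ≤ (L v).card)
    (hG : ¬ ∃ φ : V → α, IsL1StarColoring G L φ)
    (S : Finset V)
    (hmin : ∃ φ : ↥(S : Set V)ᶜ → α,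
      IsL1StarColoring (G.induce (S : Set V)ᶜ) (fun w => L w.1) φ) :
    ∃ A : V → Finset α,
      (∀ v, ∀ T ⊆ S, (∀ t ∈ T, G.Adj v t) → 3 + T.card ≤ (A v).card + G.degree v) ∧
      ∀ ψ : V → α, (∀ v ∈ S, ψ v ∈ A v) →
        ¬ ∀ v ∈ S, ∀ u ∈ S, ∀ w ∈ S, G.Adj v u → G.Adj v w → ψ u = ψ v → ψ w = ψ v → u = w := by
  classical
  obtain ⟨φ₀, hmem, hφ₀⟩ := hmin
  have hne : ∀ v, ∃ c, c ∈ L v := fun v => Finset.card_pos.1 (by have := hL v; omega)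
  choose d hd using hne
  -- Extend the coloring of `G - S` to a total function; its values on `S` play no role.
  obtain ⟨φ, hφL, hφ⟩ : ∃ φ : V → α, (∀ v, φ v ∈ L v) ∧ ∀ v u w, v ∉ S → u ∉ S → w ∉ S →
      G.Adj v u → G.Adj v w → φ u = φ v → φ w = φ v → u = w := by
    refine ⟨fun v => if h : v ∈ S then d v else φ₀ ⟨v, by simpa using h⟩, ?_, ?_⟩
    · intro v
      by_cases h : v ∈ S
      · simpa [h] using hd v
      · simpa [h] using hmem ⟨v, by simpa using h⟩
    · intro v u w hv hu hw h1 h2 h3 h4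
      simp only [hv, hu, hw, dite_false] at h3 h4
      have := hφ₀ ⟨v, by simpa using hv⟩ ⟨u, by simpa using hu⟩ ⟨w, by simpa using hw⟩
        (by simpa using h1) (by simpa using h2) h3 h4
      simpa using this
  refine ⟨fun v => L v \ (G.neighborFinset v \ S).image φ, ?_, ?_⟩
  · intro v T hTS hT
    have h1 := Finset.le_card_sdiff ((G.neighborFinset v \ S).image φ) (L v)
    have h2 : ((G.neighborFinset v \ S).image φ).card ≤ (G.neighborFinset v \ T).card :=
      Finset.card_image_le.trans (Finset.card_le_card (Finset.sdiff_subset_sdiff le_rfl hTS))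
    have hTN : T ⊆ G.neighborFinset v := fun t ht => by simpa using hT t ht
    have h3 := Finset.card_sdiff_add_card_eq_card hTN
    rw [G.card_neighborFinset_eq_degree] at h3
    have := hL v
    dsimp only
    omega
  · intro ψ hψ hS
    simp only [Finset.mem_sdiff, Finset.mem_image, SimpleGraph.mem_neighborFinset] at hψ
    refine hG ⟨fun v => if v ∈ S then ψ v else φ v, ?_, ?_⟩
    · intro v
      by_cases h : v ∈ S
      · simpa [h] using (hψ v h).1
      · simpa [h] using hφL v
    · have hcross : ∀ v ∈ S, ∀ u, u ∉ S → G.Adj v u → φ u ≠ ψ v := fun v hv u hu h e =>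
        (hψ v hv).2 ⟨u, ⟨h, hu⟩, e⟩
      intro v u w h1 h2 h3 h4
      have h1' := h1.symm
      have h2' := h2.symm
      grind

/-- If all lists have size at least 3, `G` is not `(L,1)*`-colorable, but every
proper induced subgraph of `G` is (with the restricted lists), then `G`
contains no triangle with vertex degrees `3, 4, 4` and no 4-cycle with vertex
degrees `3, 4, 3, 4` in cyclic order. -/
theorem stmt_7 {V α : Type*} [Fintype V] [DecidableEq V]
    (G : SimpleGraph V) [DecidableRel G.Adj]
    (L : V → Finset α) (hL : ∀ v, 3 ≤ (L v).card)
    (hG : ¬ ∃ φ : V → α, IsL1StarColoring G L φ)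
    (hmin : ∀ S : Set V, S.Nonempty →
      ∃ φ : ↥Sᶜ → α, IsL1StarColoring (G.induce Sᶜ) (fun w => L w.1) φ) :
    (¬ ∃ x y z : V, G.Adj x y ∧ G.Adj y z ∧ G.Adj x z ∧
        G.degree x = 3 ∧ G.degree y = 4 ∧ G.degree z = 4) ∧
      ¬ ∃ x y z u : V, G.Adj x y ∧ G.Adj y z ∧ G.Adj z u ∧ G.Adj u x ∧
        x ≠ z ∧ y ≠ u ∧
        G.degree x = 3 ∧ G.degree y = 4 ∧ G.degree z = 3 ∧ G.degree u = 4 := by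
  classical
  constructor
  · rintro ⟨x, y, z, hxy, hyz, hxz, dx, dy, dz⟩
    obtain ⟨A, hA, hψ⟩ := exists_available_lists G L hL hG {x, y, z} (hmin _ ⟨x, by simp⟩)
    have nxy := hxy.ne
    have nyz := hyz.ne
    have nxz := hxz.ne
    have cx := hA x {y, z} (by grind) (by grind)
    have cy := hA y {x, z} (by grind) (by grind [G.adj_comm])
    have cz := hA z {x, y} (by grind) (by grind [G.adj_comm])
    rw [Finset.card_pair (by grind)] at cx cy cz
    obtain ⟨b, hb⟩ := Finset.card_pos.1 (show 0 < (A y).card by omega)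
    obtain ⟨c, hc⟩ := Finset.card_pos.1 (show 0 < (A z).card by omega)
    obtain ⟨a, ha, hab⟩ := Finset.exists_mem_notMem_of_card_lt_card
      (show ({b} : Finset α).card < (A x).card by rw [Finset.card_singleton]; omega)
    refine hψ (fun v => if v = x then a else if v = y then b else c) (by grind) ?_
    simp only [Finset.mem_insert, Finset.mem_singleton]
    have hirr : ∀ v, ¬ G.Adj v v := fun v => G.irrefl
    grind
  · rintro ⟨x, y, z, u, hxy, hyz, hzu, hux, nxz, nyu, dx, dy, dz, du⟩
    obtain ⟨A, hA, hψ⟩ := exists_available_lists G L hL hG {x, y, z, u} (hmin _ ⟨x, by simp⟩)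
    have nxy := hxy.ne
    have nyz := hyz.ne
    have nzu := hzu.ne
    have nux := hux.ne
    have cx := hA x {y, u} (by grind) (by grind [G.adj_comm])
    have cy := hA y {x, z} (by grind) (by grind [G.adj_comm])
    have cz := hA z {y, u} (by grind) (by grind [G.adj_comm])
    have cu := hA u {x, z} (by grind) (by grind [G.adj_comm])
    rw [Finset.card_pair (by grind)] at cx cy cz cu
    obtain ⟨b, hb⟩ := Finset.card_pos.1 (show 0 < (A u).card by omega)
    obtain ⟨a, ha, hab⟩ : ∃ a ∈ A y, G.Adj y u → a ≠ b := by
      by_cases h : G.Adj y u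
      · have cy' := hA y {x, z, u} (by grind) (by grind [G.adj_comm])
        rw [Finset.card_eq_three.2 ⟨x, z, u, by grind, by grind, by grind, rfl⟩] at cy'
        obtain ⟨a, ha, hab⟩ := Finset.exists_mem_notMem_of_card_lt_card
          (show ({b} : Finset α).card < (A y).card by rw [Finset.card_singleton]; omega)
        exact ⟨a, ha, by grind⟩
      · obtain ⟨a, ha⟩ := Finset.card_pos.1 (show 0 < (A y).card by omega)
        exact ⟨a, ha, by grind⟩
    -- Used with `{p, q} = {a, b}`: when `p = q` or `x ≁ z`, a list of size two suffices.
    have avoid : ∀ v, 2 ≤ (A v).card → (G.Adj x z → 3 ≤ (A v).card) → ∀ p q : α,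
        ∃ c ∈ A v, c ≠ p ∧ (G.Adj x z ∨ p = q → c ≠ q) := by
      intro v h2 h3 p q
      by_cases h : G.Adj x z
      · obtain ⟨c, hc, hn⟩ := Finset.exists_mem_notMem_of_card_lt_card
          (show ({p, q} : Finset α).card < (A v).card from
            Finset.card_le_two.trans_lt (h3 h))
        exact ⟨c, hc, by grind⟩
      · obtain ⟨c, hc, hn⟩ := Finset.exists_mem_notMem_of_card_lt_card
          (show ({p} : Finset α).card < (A v).card by rw [Finset.card_singleton]; omega)
        exact ⟨c, hc, by grind⟩
    obtain ⟨c, hc, hca, hcb⟩ := avoid x (by omega) (fun h => by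
      have := hA x {y, z, u} (by grind) (by grind [G.adj_comm])
      rw [Finset.card_eq_three.2 ⟨y, z, u, by grind, by grind, by grind, rfl⟩] at this
      omega) a b
    obtain ⟨e, he, heb, hea⟩ := avoid z (by omega) (fun h => by
      have := hA z {x, y, u} (by grind) (by grind [G.adj_comm])
      rw [Finset.card_eq_three.2 ⟨x, y, u, by grind, by grind, by grind, rfl⟩] at this
      omega) b a
    refine hψ (fun v => if v = x then c else if v = y then a else if v = z then e else b)
      (by grind) ?_
    simp only [Finset.mem_insert, Finset.mem_singleton]
    have hirr : ∀ v, ¬ G.Adj v v := fun v => G.irrefl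
    have hyu := G.adj_comm y u
    have hzx := G.adj_comm x z
    rintro v (rfl | rfl | rfl | rfl) p (rfl | rfl | rfl | rfl) w (rfl | rfl | rfl | rfl) <;> grind
end
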